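/- Let χ be a real measurable function with χ(t) = 1 for 0 ≤ t ≤ 1 and 0 ≤ χ(t) ≤ 1 for t > 1, and suppose there exists T > 1 with ∫_T^∞ χ(t) dt = 0, where T is minimal with this property. Let σ be the unique solution of u·σ(u) = ∫₀^u σ(u−t)·χ(t) dt for u > 1 with σ(u) = 1 for 0 ≤ u ≤ 1, and for u > 1 let ξ(u) be the unique solution of u = ∫₁^∞ χ(v)·e^{ξ(u)·v} dv. Then ξ(u)·T/log(u) → 1 as u → ∞, and log σ(u) / (u·log(u)/T) → −1 as u → ∞. -/

import Mathlib

/-!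
For `a < T` minimality of `T` gives `0 < ∫ t in a..T, χ t`. Hence, up to constants,
`u = ∫ v in 1..T, χ v * exp (ξ u * v)` lies between `exp (a * ξ u)` and `exp (T * ξ u)`, and letting
`a → T` gives `ξ u ∼ log u / T`.

Similarly, up to constants, `u * σ u` lies between the infimum of `σ` over `[u - T, u - a]` and its
supremum over `[u - T, u]`. Each use of the lower bound costs a factor of at most `u` and goes back
by at least `a`; each use of the upper bound gains a factor of order `u` and goes back by at most
`T`. As `a → T`, about `u / T` iterations lead back to arguments that are bounded, respectively a
small multiple of `u`, whence `log (σ u) ∼ -(u / T) * log u`.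

A priori the integrals in the delay equation could take the junk value `0` of a non-integrable
function. But if `σ` is integrable up to some point, then shortly after it a junk value at `u`
forces `σ u = 0`, because `χ = 1` on `[0, 1]`, and a Gronwall argument bounds `σ u` whenever the
value is not junk. In both cases integrability propagates by a fixed step.
-/

open Filter MeasureTheory Set Topology

/-- A bounded delay kernel: the class of functions `χ` for which the delay equation of
`IsDelaySolution` is considered. Nothing is required at negative arguments. -/
structure IsDelayKernel (χ : ℝ → ℝ) (M : ℝ) : Prop where
  measurable : Measurable χ
  eq_one : ∀ t, 0 ≤ t → t ≤ 1 → χ t = 1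
  nonneg : ∀ t, 0 ≤ t → 0 ≤ χ t
  le_bound : ∀ t, 0 ≤ t → χ t ≤ M

/-- `σ` solves the delay equation with kernel `χ`. The integral is a Bochner integral, which is `0`
when the integrand is not integrable; integrability is not part of the definition. -/
structure IsDelaySolution (χ σ : ℝ → ℝ) : Prop where
  eq_one : ∀ u, 0 ≤ u → u ≤ 1 → σ u = 1
  mul_eq_integral : ∀ u, 1 < u → u * σ u = ∫ t in (0 : ℝ)..u, σ (u - t) * χ t

/-- The delay inequality `u * f u ≤ M * sup f [u - T, u]`, with the supremum replaced by an
arbitrary upper bound. -/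
def DelayUpperBound (f : ℝ → ℝ) (T M : ℝ) : Prop :=
  ∀ u, T < u → ∀ C, (∀ s ∈ Icc (u - T) u, f s ≤ C) → u * f u ≤ M * C

/-- The delay inequality `m * inf f [u - T, u - a] ≤ u * f u`, with the infimum replaced by an
arbitrary lower bound. -/
def DelayLowerBound (f : ℝ → ℝ) (a T m : ℝ) : Prop :=
  ∀ u, T < u → ∀ c, (∀ s ∈ Icc (u - T) (u - a), c ≤ f s) → m * c ≤ u * f u

/-! ### Logarithmic limits -/

lemma tendsto_mul_log_sub_div_log (p B : ℝ) :
    Tendsto (fun u : ℝ => p * (Real.log u - B) / Real.log u) atTop (𝓝 p) := by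
  have hlog : Tendsto (fun u : ℝ => (Real.log u)⁻¹) atTop (𝓝 0) :=
    tendsto_inv_atTop_zero.comp Real.tendsto_log_atTop
  have h := ((hlog.const_mul B).const_sub 1).const_mul p
  rw [mul_zero, sub_zero, mul_one] at h
  refine h.congr' ?_
  filter_upwards [eventually_gt_atTop 1] with u hu
  have := Real.log_pos hu
  field_simp

lemma tendsto_affine_mul_sub_log_div_mul_log (A p r B : ℝ) :
    Tendsto (fun u : ℝ => (A + (p * u + r) * (B - Real.log u)) / (u * Real.log u))
      atTop (𝓝 (-p)) := by
  have hinv : Tendsto (fun u : ℝ => u⁻¹) atTop (𝓝 0) := tendsto_inv_atTop_zero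
  have hlog : Tendsto (fun u : ℝ => (Real.log u)⁻¹) atTop (𝓝 0) :=
    hinv.comp Real.tendsto_log_atTop
  have h := ((hinv.const_mul A).mul hlog).add
    (((hinv.const_mul r).const_add p).mul ((hlog.const_mul B).sub_const 1))
  rw [show A * 0 * 0 + (p + r * 0) * (B * 0 - 1) = -p by ring] at h
  refine h.congr' ?_
  filter_upwards [eventually_gt_atTop 1] with u hu
  have := Real.log_pos hu
  field_simp

/-! ### Integrability on initial intervals and a Gronwall step -/

section InitialIntervals

variable {E : Type*} [NormedAddCommGroup E] {μ : Measure ℝ}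

lemma intervalIntegrable_of_le_of_le {f : ℝ → E} {a b c d : ℝ} (hf : IntervalIntegrable f μ a d)
    (hab : a ≤ b) (hbc : b ≤ c) (hcd : c ≤ d) : IntervalIntegrable f μ b c :=
  hf.mono_set <| by
    rw [uIcc_of_le hbc, uIcc_of_le (hab.trans (hbc.trans hcd))]
    exact Icc_subset_Icc hab hcd

lemma ordConnected_setOf_intervalIntegrable (f : ℝ → E) (μ : Measure ℝ) (a : ℝ) :
    OrdConnected {v | a ≤ v ∧ IntervalIntegrable f μ a v} :=
  ⟨fun _ hx _ hy _ hz => ⟨hx.1.trans hz.1,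
    intervalIntegrable_of_le_of_le hy.2 le_rfl (hx.1.trans hz.1) hz.2⟩⟩

lemma locallyIntegrableOn_setOf_intervalIntegrable [NullSingletonClass μ] (f : ℝ → E) (a : ℝ) :
    LocallyIntegrableOn f {v | a ≤ v ∧ IntervalIntegrable f μ a v} μ := by
  intro x hx
  by_cases hmax : ∃ y, x < y ∧ IntervalIntegrable f μ a y
  · obtain ⟨y, hxy, hy⟩ := hmax
    refine ⟨Icc a y, ?_, (intervalIntegrable_iff_integrableOn_Icc_of_le (hx.1.trans hxy.le)).1 hy⟩
    filter_upwards [self_mem_nhdsWithin, mem_nhdsWithin_of_mem_nhds (Iio_mem_nhds hxy)]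
      with v hv hvy
    exact ⟨hv.1, (mem_Iio.1 hvy).le⟩
  · push Not at hmax
    refine ⟨Icc a x, ?_, (intervalIntegrable_iff_integrableOn_Icc_of_le hx.1).1 hx.2⟩
    filter_upwards [self_mem_nhdsWithin] with v hv
    exact ⟨hv.1, not_lt.1 fun hxv => hmax v hxv hv.2⟩

lemma intervalIntegrable_max_neg_zero {f : ℝ → ℝ} {a b : ℝ} (hab : a ≤ b)
    (hf : IntervalIntegrable f μ a b) : IntervalIntegrable (fun s => max (-f s) 0) μ a b := by
  rw [intervalIntegrable_iff_integrableOn_Ioc_of_le hab] at hf ⊢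
  exact hf.neg_part

end InitialIntervals

lemma le_two_mul_integral_of_le_mul_integral {f : ℝ → ℝ} {a b c K : ℝ} (hab : a ≤ b)
    (hbc : b < c) (hK : 0 ≤ K) (hstep : 2 * (K * (c - b)) ≤ 1)
    (hf : IntervalIntegrable f volume a c) (hf0 : ∀ s, 0 ≤ f s)
    (h : ∀ v ∈ Ioc b c, f v ≤ K * ∫ s in a..v, f s) :
    f c ≤ 2 * K * ∫ s in a..b, f s := by
  have hfab : IntervalIntegrable f volume a b :=
    intervalIntegrable_of_le_of_le hf le_rfl hab hbc.le
  have hfbc : IntervalIntegrable f volume b c := hfab.symm.trans hf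
  have hac0 : 0 ≤ ∫ s in a..c, f s :=
    intervalIntegral.integral_nonneg (hab.trans hbc.le) fun s _ => hf0 s
  have hnew : ∫ s in b..c, f s ≤ (c - b) * (K * ∫ s in a..c, f s) := by
    rw [← smul_eq_mul, ← intervalIntegral.integral_const]
    refine intervalIntegral.integral_mono_on_of_le_Ioo hbc.le hfbc intervalIntegrable_const
      fun v hv => (h v ⟨hv.1, hv.2.le⟩).trans (mul_le_mul_of_nonneg_left ?_ hK)
    exact intervalIntegral.integral_mono_interval le_rfl (hab.trans hv.1.le) hv.2.le
      (Eventually.of_forall hf0) hf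
  have hadd := intervalIntegral.integral_add_adjacent_intervals hfab hfbc
  have hdouble : ∫ s in a..c, f s ≤ 2 * ∫ s in a..b, f s := by
    nlinarith [mul_le_mul_of_nonneg_right hstep hac0]
  have hc := h c ⟨hbc, le_rfl⟩
  nlinarith [mul_le_mul_of_nonneg_left hdouble hK]

/-! ### The exponent in a Laplace transform of prescribed size -/

section Laplace

variable {w : ℝ → ℝ} {a b x y T : ℝ}

lemma integral_mul_exp_le_mul_exp (hbT : b ≤ T) (hw : IntervalIntegrable w volume b T)
    (hw0 : ∀ v ∈ Icc b T, 0 ≤ w v) (hy : ∀ v ∈ Icc b T, x * v ≤ y) :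
    ∫ v in b..T, w v * Real.exp (x * v) ≤ (∫ v in b..T, w v) * Real.exp y := by
  rw [← intervalIntegral.integral_mul_const]
  exact intervalIntegral.integral_mono_on hbT (hw.mul_continuousOn (by fun_prop))
    (hw.mul_const _) fun v hv =>
      mul_le_mul_of_nonneg_left (Real.exp_le_exp.2 (hy v hv)) (hw0 v hv)

lemma mul_exp_le_integral_mul_exp (hba : b ≤ a) (haT : a ≤ T) (hx : 0 ≤ x)
    (hw : IntervalIntegrable w volume b T) (hw0 : ∀ v ∈ Icc b T, 0 ≤ w v) :
    (∫ v in a..T, w v) * Real.exp (x * a) ≤ ∫ v in b..T, w v * Real.exp (x * v) := by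
  have hwe : IntervalIntegrable (fun v => w v * Real.exp (x * v)) volume b T :=
    hw.mul_continuousOn (by fun_prop)
  rw [← intervalIntegral.integral_mul_const]
  calc ∫ v in a..T, w v * Real.exp (x * a)
      ≤ ∫ v in a..T, w v * Real.exp (x * v) :=
        intervalIntegral.integral_mono_on haT
          ((intervalIntegrable_of_le_of_le hw hba haT le_rfl).mul_const _)
          (intervalIntegrable_of_le_of_le hwe hba haT le_rfl) fun v hv => mul_le_mul_of_nonneg_left
            (Real.exp_le_exp.2 (mul_le_mul_of_nonneg_left hv.1 hx)) (hw0 v ⟨hba.trans hv.1, hv.2⟩)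
    _ ≤ ∫ v in b..T, w v * Real.exp (x * v) := by
        refine intervalIntegral.integral_mono_interval hba haT le_rfl ?_ hwe
        filter_upwards [ae_restrict_mem measurableSet_Ioc] with v hv
        exact mul_nonneg (hw0 v ⟨hv.1.le, hv.2⟩) (Real.exp_pos _).le

lemma pos_of_integral_lt_integral_mul_exp (hb : 0 ≤ b) (hbT : b ≤ T)
    (hw : IntervalIntegrable w volume b T) (hw0 : ∀ v ∈ Icc b T, 0 ≤ w v)
    (h : ∫ v in b..T, w v < ∫ v in b..T, w v * Real.exp (x * v)) : 0 < x := by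
  by_contra! hx
  have := integral_mul_exp_le_mul_exp (y := 0) hbT hw hw0 fun v hv =>
    mul_nonpos_of_nonpos_of_nonneg hx (hb.trans hv.1)
  rw [Real.exp_zero, mul_one] at this
  exact h.not_ge this

lemma log_integral_mul_exp_le (hbT : b ≤ T) (hx : 0 ≤ x) (hw : IntervalIntegrable w volume b T)
    (hw0 : ∀ v ∈ Icc b T, 0 ≤ w v) (hpos : 0 < ∫ v in b..T, w v * Real.exp (x * v)) :
    Real.log (∫ v in b..T, w v * Real.exp (x * v)) ≤ Real.log (∫ v in b..T, w v) + x * T := by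
  have h := integral_mul_exp_le_mul_exp hbT hw hw0 fun v hv =>
    mul_le_mul_of_nonneg_left hv.2 hx
  have hmass : 0 < ∫ v in b..T, w v :=
    pos_of_mul_pos_left (hpos.trans_le h) (Real.exp_pos _).le
  have hlog := Real.log_le_log hpos h
  rwa [Real.log_mul hmass.ne' (Real.exp_pos _).ne', Real.log_exp] at hlog

lemma le_log_integral_mul_exp (hba : b ≤ a) (haT : a ≤ T) (hx : 0 ≤ x)
    (hw : IntervalIntegrable w volume b T) (hw0 : ∀ v ∈ Icc b T, 0 ≤ w v)
    (hmass : 0 < ∫ v in a..T, w v) :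
    Real.log (∫ v in a..T, w v) + x * a ≤ Real.log (∫ v in b..T, w v * Real.exp (x * v)) := by
  have hlog := Real.log_le_log (by positivity) (mul_exp_le_integral_mul_exp hba haT hx hw hw0)
  rwa [Real.log_mul hmass.ne' (Real.exp_pos _).ne', Real.log_exp] at hlog

theorem tendsto_mul_div_log_of_integral_mul_exp_eq {ξ : ℝ → ℝ} (hb : 0 ≤ b) (hbT : b < T)
    (hw : IntervalIntegrable w volume b T) (hw0 : ∀ v ∈ Icc b T, 0 ≤ w v)
    (hmass : ∀ a ∈ Ico b T, 0 < ∫ v in a..T, w v)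
    (hξ : ∀ᶠ u in atTop, ∫ v in b..T, w v * Real.exp (ξ u * v) = u) :
    Tendsto (fun u => ξ u * T / Real.log u) atTop (𝓝 1) := by
  have hT : 0 < T := hb.trans_lt hbT
  have hξpos : ∀ᶠ u in atTop, 0 < ξ u := by
    filter_upwards [hξ, eventually_gt_atTop (∫ v in b..T, w v)] with u hu hWu
    exact pos_of_integral_lt_integral_mul_exp hb hbT.le hw hw0 (hWu.trans_eq hu.symm)
  refine tendsto_order.2 ⟨fun l hl => ?_, fun l hl => ?_⟩
  · filter_upwards [hξ, hξpos, eventually_gt_atTop 1,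
      (tendsto_mul_log_sub_div_log 1 (Real.log (∫ v in b..T, w v))).eventually_const_lt hl]
      with u hu hξu hu1 hlu
    refine hlu.trans_le (div_le_div_of_nonneg_right ?_ (Real.log_pos hu1).le)
    have hlog := log_integral_mul_exp_le hbT.le hξu.le hw hw0 (by rw [hu]; linarith)
    rw [hu] at hlog
    linarith
  · obtain ⟨a, hla, hba, haT⟩ : ∃ a, T / a < l ∧ a ∈ Ioo b T := by
      have hcont : Tendsto (fun a => T / a) (𝓝[<] T) (𝓝 (T / T)) :=
        ((continuousAt_const.div continuousAt_id hT.ne').tendsto).mono_left nhdsWithin_le_nhds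
      rw [div_self hT.ne'] at hcont
      exact ((hcont.eventually_lt_const hl).and (Ioo_mem_nhdsLT hbT)).exists
    have ha : 0 < a := hb.trans_lt hba
    filter_upwards [hξ, hξpos, eventually_gt_atTop 1,
      (tendsto_mul_log_sub_div_log (T / a) (Real.log (∫ v in a..T, w v))).eventually_lt_const hla]
      with u hu hξu hu1 hul
    refine (div_le_div_of_nonneg_right ?_ (Real.log_pos hu1).le).trans_lt hul
    have hlog := le_log_integral_mul_exp hba.le haT.le hξu.le hw hw0 (hmass a ⟨hba.le, haT⟩)
    rw [hu] at hlog
    calc ξ u * T = T / a * (ξ u * a) := by field_simp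
      _ ≤ T / a * (Real.log u - Real.log (∫ v in a..T, w v)) :=
        mul_le_mul_of_nonneg_left (by linarith) (by positivity)

end Laplace

/-! ### Decay of functions satisfying delay inequalities -/

section DelayInequalities

variable {f : ℝ → ℝ} {a c C m M S T U : ℝ}

lemma DelayUpperBound.exists_forall_le (h : DelayUpperBound f T M) (hT : 0 ≤ T) (hM : 0 ≤ M)
    (hf : ∀ s, 0 ≤ s → 0 ≤ f s) (hloc : ∀ U, ∃ C, ∀ s ∈ Icc 0 U, f s ≤ C) :
    ∃ C, ∀ s, 0 ≤ s → f s ≤ C := by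
  obtain ⟨C, hC⟩ := hloc (T + 2 * M + 1)
  refine ⟨C, fun U hU => ?_⟩
  obtain ⟨B, hB⟩ := hloc U
  have hbdd : BddAbove (f '' Icc 0 U) := ⟨B, forall_mem_image.2 hB⟩
  set Q := sSup (f '' Icc 0 U)
  have hle : ∀ s ∈ Icc 0 U, f s ≤ Q := fun s hs => le_csSup hbdd (mem_image_of_mem f hs)
  have hUQ := hle U ⟨hU, le_rfl⟩
  have hQ : 0 ≤ Q := (hf U hU).trans hUQ
  have hmax : Q ≤ max C (Q / 2) := by
    refine csSup_le ⟨_, U, ⟨hU, le_rfl⟩, rfl⟩ (forall_mem_image.2 fun s hs => ?_)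
    rcases le_or_gt s (T + 2 * M + 1) with hsmall | hlarge
    · exact le_max_of_le_left (hC s ⟨hs.1, hsmall⟩)
    · have hwindow := h s (by linarith) Q fun r hr =>
        hle r ⟨by linarith [hr.1], hr.2.trans hs.2⟩
      refine le_max_of_le_right ?_
      by_contra! hlt
      nlinarith [mul_le_mul_of_nonneg_left hlt.le hM]
  rcases le_max_iff.1 hmax with hQC | hQhalf
  · exact hUQ.trans hQC
  · linarith [hC 0 ⟨le_rfl, by linarith⟩, hf 0 le_rfl]

lemma DelayUpperBound.le_mul_pow {K : ℝ} (h : DelayUpperBound f T M) (hT : 0 ≤ T) (hK : 0 < K)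
    (hf : ∀ s, 0 ≤ s → 0 ≤ f s) (hC : ∀ s, 0 ≤ s → f s ≤ C) (n : ℕ) :
    ∀ u, K + n * T ≤ u → f u ≤ C * (M / K) ^ n := by
  induction n with
  | zero =>
    intro u hu
    rw [Nat.cast_zero, zero_mul, add_zero] at hu
    simpa using hC u (hK.le.trans hu)
  | succ n ih =>
    intro u hu
    push_cast at hu
    have hnT : 0 ≤ (n : ℝ) * T := by positivity
    have hKu : K * f u ≤ u * f u :=
      mul_le_mul_of_nonneg_right (by linarith) (hf u (by linarith))
    have hwindow := h u (by linarith) _ fun s hs => ih s (by linarith [hs.1])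
    rw [pow_succ, ← mul_assoc, ← mul_div_assoc, le_div_iff₀ hK]
    linarith

lemma DelayUpperBound.log_le (h : DelayUpperBound f T M) (hT : 0 < T) (hM : 0 < M) (hTS : T < S)
    (hf : ∀ s, 0 ≤ s → 0 < f s) (hC : ∀ s, 0 ≤ s → f s ≤ C)
    (hMU : M / (1 - T / S) ≤ U) :
    Real.log (f U) ≤
      Real.log C + (U / S - 1) * (Real.log (M / (1 - T / S)) - Real.log U) := by
  have hS : 0 < S := hT.trans hTS
  have hκ : 0 < 1 - T / S := sub_pos.2 ((div_lt_one hS).2 hTS)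
  have hU : 0 < U := (div_pos hM hκ).trans_le hMU
  set q := M / (1 - T / S) / U with hq
  have hq0 : 0 < q := by positivity
  have hq1 : q ≤ 1 := (div_le_one hU).2 hMU
  have hC0 : 0 < C := (hf 0 le_rfl).trans_le (hC 0 le_rfl)
  have hfloor : (1 - T / S) * U + ⌊U / S⌋₊ * T ≤ U := by
    have := mul_le_mul_of_nonneg_right (Nat.floor_le (show 0 ≤ U / S by positivity)) hT.le
    have hsplit : U / S * T = T / S * U := by ring
    linarith
  have hpow := h.le_mul_pow hT.le (mul_pos hκ hU) (fun s hs => (hf s hs).le) hC _ U hfloor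
  rw [← div_div, ← hq] at hpow
  have hlog := Real.log_le_log (hf U hU.le) hpow
  rw [Real.log_mul hC0.ne' (by positivity), Real.log_pow] at hlog
  rw [← Real.log_div (by positivity) hU.ne', ← hq]
  have := mul_le_mul_of_nonpos_right (sub_le_iff_le_add.2 (Nat.lt_floor_add_one (U / S)).le)
    (Real.log_nonpos hq0.le hq1)
  linarith

lemma DelayLowerBound.mul_pow_le (h : DelayLowerBound f a T m) (ha : 0 ≤ a)
    (hm : 0 ≤ m) (hf : ∀ s, 0 ≤ s → 0 ≤ f s) (hc0 : 0 ≤ c) (hc : ∀ s ∈ Icc 0 T, c ≤ f s)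
    (hU : 0 < U) (hmU : m ≤ U) (n : ℕ) :
    ∀ u, 0 ≤ u → u ≤ U → u ≤ T + n * a → c * (m / U) ^ n ≤ f u := by
  have hq0 : 0 ≤ m / U := by positivity
  have hq1 : m / U ≤ 1 := (div_le_one hU).2 hmU
  induction n with
  | zero => intro u hu _ huT; simpa using hc u ⟨hu, by simpa using huT⟩
  | succ n ih =>
    intro u hu huU hun
    push_cast at hun
    rcases le_or_gt u T with huT | hTu
    · exact (mul_le_of_le_one_right hc0 (pow_le_one₀ hq0 hq1)).trans (hc u ⟨hu, huT⟩)
    · have hwindow := h u hTu _ fun s hs =>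
        ih s (by linarith [hs.1]) (by linarith [hs.2]) (by linarith [hs.2])
      have hUu : u * f u ≤ U * f u := mul_le_mul_of_nonneg_right huU (hf u hu)
      rw [pow_succ, ← mul_assoc, ← mul_div_assoc, div_le_iff₀ hU]
      linarith

lemma DelayLowerBound.le_log (h : DelayLowerBound f a T m) (ha : 0 < a) (hT : 0 ≤ T)
    (hm : 0 < m) (hf : ∀ s, 0 ≤ s → 0 ≤ f s) (hc0 : 0 < c) (hc : ∀ s ∈ Icc 0 T, c ≤ f s)
    (hmU : m ≤ U) :
    Real.log c + (U / a + 1) * (Real.log m - Real.log U) ≤ Real.log (f U) := by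
  have hU : 0 < U := hm.trans_le hmU
  have hceil : U ≤ T + ⌈U / a⌉₊ * a := by
    linarith [(div_le_iff₀ ha).1 (Nat.le_ceil (U / a))]
  have hpow := h.mul_pow_le ha.le hm.le hf hc0.le hc hU hmU _ U hU.le le_rfl hceil
  have hlog := Real.log_le_log (by positivity) hpow
  rw [Real.log_mul hc0.ne' (by positivity), Real.log_pow] at hlog
  rw [← Real.log_div hm.ne' hU.ne']
  have := mul_le_mul_of_nonpos_right (Nat.ceil_lt_add_one (div_pos hU ha).le).le
    (Real.log_nonpos (show 0 ≤ m / U by positivity) ((div_le_one hU).2 hmU))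
  linarith

lemma DelayUpperBound.eventually_log_div_lt (h : DelayUpperBound f T M) (hT : 0 < T) (hM : 0 < M)
    (hf : ∀ s, 0 ≤ s → 0 < f s) (hC : ∀ s, 0 ≤ s → f s ≤ C) {l : ℝ} (hl : -T⁻¹ < l) :
    ∀ᶠ u in atTop, Real.log (f u) / (u * Real.log u) < l := by
  obtain ⟨S, hSl, hTS⟩ : ∃ S, -S⁻¹ < l ∧ T < S := by
    have hcont : Tendsto (fun S : ℝ => -S⁻¹) (𝓝[>] T) (𝓝 (-T⁻¹)) :=
      (tendsto_inv₀ hT.ne').neg.mono_left nhdsWithin_le_nhds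
    exact ((hcont.eventually_lt_const hl).and self_mem_nhdsWithin).exists
  filter_upwards [eventually_gt_atTop 1, eventually_ge_atTop (M / (1 - T / S)),
    (tendsto_affine_mul_sub_log_div_mul_log (Real.log C) S⁻¹ (-1)
      (Real.log (M / (1 - T / S)))).eventually_lt_const hSl] with u hu1 hMu hul
  have hlog := Real.log_pos hu1
  refine (div_le_div_of_nonneg_right ?_ (by positivity)).trans_lt hul
  rw [← sub_eq_add_neg, inv_mul_eq_div]
  exact h.log_le hT hM hTS hf hC hMu

lemma eventually_lt_log_div_of_delayLowerBound (hT : 0 < T)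
    (h : ∀ a ∈ Ioo 0 T, ∃ m > 0, DelayLowerBound f a T m)
    (hf : ∀ s, 0 ≤ s → 0 ≤ f s) (hc0 : 0 < c) (hc : ∀ s ∈ Icc 0 T, c ≤ f s)
    {l : ℝ} (hl : l < -T⁻¹) :
    ∀ᶠ u in atTop, l < Real.log (f u) / (u * Real.log u) := by
  obtain ⟨a, hla, ha⟩ : ∃ a, l < -a⁻¹ ∧ a ∈ Ioo 0 T := by
    have hcont : Tendsto (fun a : ℝ => -a⁻¹) (𝓝[<] T) (𝓝 (-T⁻¹)) :=
      (tendsto_inv₀ hT.ne').neg.mono_left nhdsWithin_le_nhds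
    exact ((hcont.eventually_const_lt hl).and (Ioo_mem_nhdsLT hT)).exists
  obtain ⟨m, hm, hlower⟩ := h a ha
  filter_upwards [eventually_gt_atTop 1, eventually_ge_atTop m,
    (tendsto_affine_mul_sub_log_div_mul_log (Real.log c) a⁻¹ 1
      (Real.log m)).eventually_const_lt hla] with u hu1 hmu hlu
  have hlog := Real.log_pos hu1
  refine hlu.trans_le (div_le_div_of_nonneg_right ?_ (by positivity))
  rw [inv_mul_eq_div]
  exact hlower.le_log ha.1 hT.le hm hf hc0 hc hmu

theorem DelayUpperBound.tendsto_log_div (hupper : DelayUpperBound f T M) (hT : 0 < T) (hM : 0 < M)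
    (hlower : ∀ a ∈ Ioo 0 T, ∃ m > 0, DelayLowerBound f a T m)
    (hlocLower : ∀ U, ∃ c > 0, ∀ s ∈ Icc 0 U, c ≤ f s)
    (hlocUpper : ∀ U, ∃ C, ∀ s ∈ Icc 0 U, f s ≤ C) :
    Tendsto (fun u => Real.log (f u) / (u * Real.log u)) atTop (𝓝 (-T⁻¹)) := by
  have hpos : ∀ s, 0 ≤ s → 0 < f s := fun s hs => by
    obtain ⟨c, hc0, hc⟩ := hlocLower s
    exact hc0.trans_le (hc s ⟨hs, le_rfl⟩)
  have hnonneg : ∀ s, 0 ≤ s → 0 ≤ f s := fun s hs => (hpos s hs).le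
  obtain ⟨c, hc0, hc⟩ := hlocLower T
  obtain ⟨C, hC⟩ := hupper.exists_forall_le hT.le hM.le hnonneg hlocUpper
  exact tendsto_order.2
    ⟨fun l hl => eventually_lt_log_div_of_delayLowerBound hT hlower hnonneg hc0 hc hl,
      fun l hl => hupper.eventually_log_div_lt hT hM hpos hC hl⟩

end DelayInequalities

/-! ### Regularity of solutions of the delay equation -/

namespace IsDelayKernel

variable {χ f g : ℝ → ℝ} {p q u M : ℝ}

lemma one_le (hχ : IsDelayKernel χ M) : 1 ≤ M :=
  (hχ.eq_one 0 le_rfl zero_le_one).ge.trans (hχ.le_bound 0 le_rfl)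

lemma intervalIntegrable (hχ : IsDelayKernel χ M) (hp : 0 ≤ p) (hpq : p ≤ q) :
    IntervalIntegrable χ volume p q := by
  refine (intervalIntegrable_const (c := M)).mono_fun' hχ.measurable.aestronglyMeasurable ?_
  filter_upwards [ae_restrict_mem measurableSet_uIoc] with t ht
  rw [uIoc_of_le hpq] at ht
  have ht0 : 0 ≤ t := hp.trans ht.1.le
  rw [Real.norm_of_nonneg (hχ.nonneg t ht0)]
  exact hχ.le_bound t ht0

lemma intervalIntegrable_comp_sub_mul (hχ : IsDelayKernel χ M) (hu : 0 ≤ u)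
    (hf : IntervalIntegrable f volume 0 u) :
    IntervalIntegrable (fun t => f (u - t) * χ t) volume 0 u := by
  have hrefl : IntervalIntegrable (fun t => f (u - t)) volume 0 u := by
    simpa using (hf.comp_sub_left u).symm
  rw [intervalIntegrable_iff_integrableOn_Ioc_of_le hu] at hrefl ⊢
  refine Integrable.mul_bdd (c := M) hrefl hχ.measurable.aestronglyMeasurable ?_
  filter_upwards [ae_restrict_mem measurableSet_Ioc] with t ht
  rw [Real.norm_of_nonneg (hχ.nonneg t ht.1.le)]
  exact hχ.le_bound t ht.1.le

lemma integral_comp_sub_mul_le (hχ : IsDelayKernel χ M) (hu : 0 ≤ u)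
    (hf : IntervalIntegrable f volume 0 u) (hg : IntervalIntegrable g volume 0 u)
    (hg0 : ∀ s, 0 ≤ g s) (hfg : ∀ s, f s ≤ g s) :
    ∫ t in (0 : ℝ)..u, f (u - t) * χ t ≤ M * ∫ s in (0 : ℝ)..u, g s := by
  have hrefl : IntervalIntegrable (fun t => g (u - t)) volume 0 u := by
    simpa using (hg.comp_sub_left u).symm
  calc ∫ t in (0 : ℝ)..u, f (u - t) * χ t
      ≤ ∫ t in (0 : ℝ)..u, M * g (u - t) := by
        refine intervalIntegral.integral_mono_on hu (hχ.intervalIntegrable_comp_sub_mul hu hf)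
          (hrefl.const_mul M) fun t ht => ?_
        calc f (u - t) * χ t ≤ g (u - t) * χ t :=
              mul_le_mul_of_nonneg_right (hfg _) (hχ.nonneg t ht.1)
          _ ≤ g (u - t) * M := mul_le_mul_of_nonneg_left (hχ.le_bound t ht.1) (hg0 _)
          _ = M * g (u - t) := mul_comm _ _
    _ = M * ∫ s in (0 : ℝ)..u, g s := by
        rw [intervalIntegral.integral_const_mul,
          intervalIntegral.integral_comp_sub_left (fun s => g s) u, sub_self, sub_zero]

end IsDelayKernel

namespace IsDelaySolution

variable {χ σ : ℝ → ℝ} {b u v M : ℝ}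

lemma abs_le_mul_integral_abs (hσ : IsDelaySolution χ σ) (hχ : IsDelayKernel χ M) (hu : 1 < u)
    (hint : IntervalIntegrable σ volume 0 u) : |σ u| ≤ M * ∫ s in (0 : ℝ)..u, |σ s| := by
  have hu0 : 0 ≤ u := by linarith
  have habs : |u * σ u| ≤ M * ∫ s in (0 : ℝ)..u, |σ s| := by
    rw [hσ.mul_eq_integral u hu, abs_le']
    refine ⟨hχ.integral_comp_sub_mul_le hu0 hint hint.abs (fun s => abs_nonneg (σ s))
      fun s => le_abs_self (σ s), ?_⟩
    simpa only [neg_mul, intervalIntegral.integral_neg] using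
      hχ.integral_comp_sub_mul_le (f := fun s => -σ s) hu0 hint.neg hint.abs
        (fun s => abs_nonneg (σ s)) fun s => neg_le_abs (σ s)
  rw [abs_mul, abs_of_nonneg hu0] at habs
  exact (le_mul_of_one_le_left (abs_nonneg _) hu.le).trans habs

lemma max_neg_zero_le_mul_integral (hσ : IsDelaySolution χ σ) (hχ : IsDelayKernel χ M)
    (hu : 1 < u) (hint : IntervalIntegrable σ volume 0 u) :
    max (-σ u) 0 ≤ M * ∫ s in (0 : ℝ)..u, max (-σ s) 0 := by
  have hu0 : 0 ≤ u := by linarith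
  have hneg := intervalIntegrable_max_neg_zero hu0 hint
  have hle : -(u * σ u) ≤ M * ∫ s in (0 : ℝ)..u, max (-σ s) 0 := by
    rw [hσ.mul_eq_integral u hu]
    simpa only [neg_mul, intervalIntegral.integral_neg] using
      hχ.integral_comp_sub_mul_le (f := fun s => -σ s) hu0 hint.neg hneg
        (fun s => le_max_right _ _) fun s => le_max_left _ _
  have hnonneg : 0 ≤ M * ∫ s in (0 : ℝ)..u, max (-σ s) 0 :=
    mul_nonneg (zero_le_one.trans hχ.one_le)
      (intervalIntegral.integral_nonneg hu0 fun s _ => le_max_right _ _)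
  refine max_le ?_ hnonneg
  by_contra! hlt
  nlinarith

lemma eq_zero_of_not_intervalIntegrable (hσ : IsDelaySolution χ σ) (hχ : IsDelayKernel χ M)
    (hb : 1 ≤ b) (hint : IntervalIntegrable σ volume 0 b) (hbv : b < v) (hvb : v ≤ b + 1)
    (hnot : ¬ IntervalIntegrable σ volume 0 v) : σ v = 0 := by
  have hproduct : ¬ IntervalIntegrable (fun t => σ (v - t) * χ t) volume 0 v := by
    intro h
    have hunit : IntervalIntegrable (fun t => σ (v - t)) volume 0 1 := by
      refine (intervalIntegrable_of_le_of_le h le_rfl zero_le_one (by linarith)).congr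
        fun t ht => ?_
      rw [uIoc_of_le zero_le_one] at ht
      simp only [hχ.eq_one t ht.1.le ht.2, mul_one]
    have hrecent : IntervalIntegrable σ volume (v - 1) v := by
      simpa using (hunit.comp_sub_left v).symm
    have hpast : IntervalIntegrable σ volume 0 (v - 1) :=
      intervalIntegrable_of_le_of_le hint le_rfl (by linarith) (by linarith)
    exact hnot (hpast.trans hrecent)
  have heq := hσ.mul_eq_integral v (by linarith)
  rw [intervalIntegral.integral_undef hproduct] at heq
  exact (mul_eq_zero.1 heq).resolve_left (by linarith)

lemma abs_le_two_mul_integral_abs (hσ : IsDelaySolution χ σ) (hχ : IsDelayKernel χ M)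
    (hb : 1 ≤ b) (hint : IntervalIntegrable σ volume 0 b) (hbv : b < v)
    (hstep : 2 * (M * (v - b)) ≤ 1) : |σ v| ≤ 2 * M * ∫ s in (0 : ℝ)..b, |σ s| := by
  have hM := hχ.one_le
  by_cases hv : IntervalIntegrable σ volume 0 v
  · refine le_two_mul_integral_of_le_mul_integral (f := fun s => |σ s|) (by linarith) hbv
      (by linarith) hstep hv.abs (fun s => abs_nonneg _) fun w hw => ?_
    exact hσ.abs_le_mul_integral_abs hχ (by linarith [hw.1])
      (intervalIntegrable_of_le_of_le hv le_rfl (by linarith [hw.1]) hw.2)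
  · rw [hσ.eq_zero_of_not_intervalIntegrable hχ hb hint hbv (by nlinarith) hv, abs_zero]
    have : 0 ≤ ∫ s in (0 : ℝ)..b, |σ s| :=
      intervalIntegral.integral_nonneg (by linarith) fun s _ => abs_nonneg (σ s)
    positivity

lemma aestronglyMeasurable_restrict_Ioc (hσ : IsDelaySolution χ σ) (hχ : IsDelayKernel χ M)
    (hb : 1 ≤ b) (hint : IntervalIntegrable σ volume 0 b) :
    AEStronglyMeasurable σ (volume.restrict (Ioc b (b + 1))) := by
  set A := {v | 0 ≤ v ∧ IntervalIntegrable σ volume 0 v}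
  have hA : AEStronglyMeasurable (A.indicator σ) volume :=
    (aestronglyMeasurable_indicator_iff
      (ordConnected_setOf_intervalIntegrable σ volume 0).measurableSet).2
      (locallyIntegrableOn_setOf_intervalIntegrable σ 0).aestronglyMeasurable
  refine hA.restrict.congr ?_
  filter_upwards [ae_restrict_mem measurableSet_Ioc] with v hv
  refine indicator_apply_eq_self.2 fun hvA => ?_
  exact hσ.eq_zero_of_not_intervalIntegrable hχ hb hint hv.1 hv.2 fun h =>
    hvA ⟨by linarith [hv.1], h⟩

lemma intervalIntegrable_add_step (hσ : IsDelaySolution χ σ) (hχ : IsDelayKernel χ M) (hb : 1 ≤ b)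
    (hint : IntervalIntegrable σ volume 0 b) :
    IntervalIntegrable σ volume 0 (b + (2 * M)⁻¹) := by
  have hM := hχ.one_le
  have hδ : 0 < (2 * M)⁻¹ := by positivity
  have hδ1 : (2 * M)⁻¹ ≤ 1 := inv_le_one_of_one_le₀ (by linarith)
  have hnew : IntegrableOn σ (Ioc b (b + (2 * M)⁻¹)) := by
    refine Integrable.of_bound ((hσ.aestronglyMeasurable_restrict_Ioc hχ hb hint).mono_set
      (Ioc_subset_Ioc_right (by linarith))) (2 * M * ∫ s in (0 : ℝ)..b, |σ s|) ?_
    filter_upwards [ae_restrict_mem measurableSet_Ioc] with v hv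
    refine hσ.abs_le_two_mul_integral_abs hχ hb hint hv.1 ?_
    rw [← mul_assoc, ← le_inv_mul_iff₀ (by positivity), mul_one]
    linarith [hv.2]
  exact hint.trans ((intervalIntegrable_iff_integrableOn_Ioc_of_le (by linarith)).2 hnew)

theorem intervalIntegrable (hσ : IsDelaySolution χ σ) (hχ : IsDelayKernel χ M) (hu : 0 ≤ u) :
    IntervalIntegrable σ volume 0 u := by
  have hM := hχ.one_le
  have hone : IntervalIntegrable σ volume 0 1 := by
    refine (intervalIntegrable_const (c := (1 : ℝ))).congr fun t ht => ?_
    rw [uIoc_of_le zero_le_one] at ht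
    exact (hσ.eq_one t ht.1.le ht.2).symm
  have hsteps : ∀ n : ℕ, IntervalIntegrable σ volume 0 (1 + n * (2 * M)⁻¹) := by
    intro n
    induction n with
    | zero => simpa using hone
    | succ n ih =>
      have h := hσ.intervalIntegrable_add_step hχ (le_add_of_nonneg_right (by positivity)) ih
      rwa [add_assoc, ← add_one_mul, ← Nat.cast_add_one] at h
  obtain ⟨n, hn⟩ := exists_nat_ge (u * (2 * M))
  refine intervalIntegrable_of_le_of_le (hsteps n) le_rfl hu ?_
  linarith [(le_mul_inv_iff₀ (show 0 < 2 * M by linarith)).2 hn]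

lemma exists_forall_le (hσ : IsDelaySolution χ σ) (hχ : IsDelayKernel χ M) (U : ℝ) :
    ∃ C, ∀ s ∈ Icc 0 U, σ s ≤ C := by
  refine ⟨max 1 (M * ∫ s in (0 : ℝ)..U, |σ s|), fun s hs => ?_⟩
  rcases le_or_gt s 1 with hs1 | hs1
  · exact (hσ.eq_one s hs.1 hs1).le.trans (le_max_left _ _)
  · refine le_max_of_le_right ((le_abs_self _).trans ?_)
    refine (hσ.abs_le_mul_integral_abs hχ hs1 (hσ.intervalIntegrable hχ hs.1)).trans ?_
    exact mul_le_mul_of_nonneg_left (intervalIntegral.integral_mono_interval le_rfl hs.1 hs.2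
      (Eventually.of_forall fun _ => abs_nonneg _) (hσ.intervalIntegrable hχ (hs.1.trans hs.2)).abs)
      (zero_le_one.trans hχ.one_le)

lemma integral_mul_le_mul (hσ : IsDelaySolution χ σ) (hχ : IsDelayKernel χ M) {p q c : ℝ}
    (hu : 1 < u) (hp : 0 ≤ p) (hpq : p ≤ q) (hqu : q ≤ u) (hσ0 : ∀ s ∈ Icc 0 u, 0 ≤ σ s)
    (hc : ∀ s ∈ Icc (u - q) (u - p), c ≤ σ s) : (∫ t in p..q, χ t) * c ≤ u * σ u := by
  have hint := hχ.intervalIntegrable_comp_sub_mul (by linarith)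
    (hσ.intervalIntegrable hχ (show 0 ≤ u by linarith))
  rw [hσ.mul_eq_integral u hu, mul_comm, ← intervalIntegral.integral_const_mul]
  calc ∫ t in p..q, c * χ t
      ≤ ∫ t in p..q, σ (u - t) * χ t :=
        intervalIntegral.integral_mono_on hpq ((hχ.intervalIntegrable hp hpq).const_mul c)
          (intervalIntegrable_of_le_of_le hint hp hpq hqu) fun t ht =>
            mul_le_mul_of_nonneg_right (hc _ ⟨by linarith [ht.2], by linarith [ht.1]⟩)
              (hχ.nonneg t (hp.trans ht.1))
    _ ≤ ∫ t in (0 : ℝ)..u, σ (u - t) * χ t := by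
        refine intervalIntegral.integral_mono_interval hp hpq hqu ?_ hint
        filter_upwards [ae_restrict_mem measurableSet_Ioc] with t ht
        exact mul_nonneg (hσ0 _ ⟨by linarith [ht.2], by linarith [ht.1]⟩) (hχ.nonneg t ht.1.le)

lemma nonneg_of_le_add_step (hσ : IsDelaySolution χ σ) (hχ : IsDelayKernel χ M) (hb : 1 ≤ b)
    (hσ0 : ∀ s ∈ Icc 0 b, 0 ≤ σ s) : ∀ s ∈ Icc 0 (b + (2 * M)⁻¹), 0 ≤ σ s := by
  intro s hs
  have hM := hχ.one_le
  rcases le_or_gt s b with hsb | hbs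
  · exact hσ0 s ⟨hs.1, hsb⟩
  have hpast : ∫ r in (0 : ℝ)..b, max (-σ r) 0 = 0 := by
    refine intervalIntegral.integral_zero_ae (Eventually.of_forall fun r hr => ?_)
    rw [uIoc_of_le (by linarith)] at hr
    exact max_eq_right (neg_nonpos.2 (hσ0 r ⟨hr.1.le, hr.2⟩))
  have hneg : IntervalIntegrable (fun r => max (-σ r) 0) volume 0 s :=
    intervalIntegrable_max_neg_zero hs.1 (hσ.intervalIntegrable hχ hs.1)
  have h := le_two_mul_integral_of_le_mul_integral (K := M) (by linarith) hbs (by linarith)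
    (by
      rw [← mul_assoc, ← le_inv_mul_iff₀ (by positivity), mul_one]
      linarith [hs.2])
    hneg (fun r => le_max_right _ _) fun v hv =>
      hσ.max_neg_zero_le_mul_integral hχ (by linarith [hv.1])
        (hσ.intervalIntegrable hχ (by linarith [hv.1]))
  rw [hpast, mul_zero] at h
  exact neg_nonpos.1 ((le_max_left _ _).trans h)

lemma exists_pos_forall_le_add_step (hσ : IsDelaySolution χ σ) (hχ : IsDelayKernel χ M)
    (hb : 1 ≤ b) (h : ∃ c > 0, ∀ s ∈ Icc 0 b, c ≤ σ s) :
    ∃ c > 0, ∀ s ∈ Icc 0 (b + (2 * M)⁻¹), c ≤ σ s := by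
  obtain ⟨c, hc0, hc⟩ := h
  have hM := hχ.one_le
  have hδ : (2 * M)⁻¹ ≤ 1 / 2 := by
    rw [one_div]
    exact inv_anti₀ two_pos (by linarith)
  have hσ0 := hσ.nonneg_of_le_add_step hχ hb fun s hs => hc0.le.trans (hc s hs)
  refine ⟨min c (c / (2 * (b + 1 / 2))), by positivity, fun s hs => ?_⟩
  rcases le_or_gt s b with hsb | hbs
  · exact (min_le_left _ _).trans (hc s ⟨hs.1, hsb⟩)
  have hmul := hσ.integral_mul_le_mul hχ (p := s - b) (q := 1) (c := c) (by linarith)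
    (by linarith) (by linarith [hs.2]) (by linarith) (fun r hr => hσ0 r ⟨hr.1, hr.2.trans hs.2⟩)
    fun r hr => hc r ⟨by linarith [hr.1], by linarith [hr.2]⟩
  have hone : ∫ t in (s - b)..1, χ t = 1 - (s - b) := by
    rw [intervalIntegral.integral_congr (g := fun _ => (1 : ℝ)), integral_one]
    intro t ht
    rw [uIcc_of_le (by linarith [hs.2])] at ht
    exact hχ.eq_one t (by linarith [ht.1]) ht.2
  rw [hone] at hmul
  refine (min_le_right _ _).trans ?_
  rw [div_le_iff₀ (by linarith)]
  nlinarith [hσ0 s hs, hs.2]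

theorem exists_pos_forall_le (hσ : IsDelaySolution χ σ) (hχ : IsDelayKernel χ M) (U : ℝ) :
    ∃ c > 0, ∀ s ∈ Icc 0 U, c ≤ σ s := by
  have hM := hχ.one_le
  have hsteps : ∀ n : ℕ, ∃ c > 0, ∀ s ∈ Icc 0 (1 + n * (2 * M)⁻¹), c ≤ σ s := by
    intro n
    induction n with
    | zero => exact ⟨1, one_pos, fun s hs => (hσ.eq_one s hs.1 (by simpa using hs.2)).ge⟩
    | succ n ih =>
      have h := hσ.exists_pos_forall_le_add_step hχ (le_add_of_nonneg_right (by positivity)) ih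
      rwa [add_assoc, ← add_one_mul, ← Nat.cast_add_one] at h
  obtain ⟨n, hn⟩ := exists_nat_ge (U * (2 * M))
  obtain ⟨c, hc0, hc⟩ := hsteps n
  refine ⟨c, hc0, fun s hs => hc s ⟨hs.1, ?_⟩⟩
  linarith [hs.2, (le_mul_inv_iff₀ (show 0 < 2 * M by linarith)).2 hn]

theorem nonneg (hσ : IsDelaySolution χ σ) (hχ : IsDelayKernel χ M) (hu : 0 ≤ u) : 0 ≤ σ u := by
  obtain ⟨c, hc0, hc⟩ := hσ.exists_pos_forall_le hχ u
  exact hc0.le.trans (hc u ⟨hu, le_rfl⟩)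

theorem delayLowerBound (hσ : IsDelaySolution χ σ) (hχ : IsDelayKernel χ M) {a T : ℝ} (hT : 1 ≤ T)
    (ha : 0 ≤ a) (haT : a ≤ T) : DelayLowerBound σ a T (∫ t in a..T, χ t) :=
  fun _ hu _ hc => hσ.integral_mul_le_mul hχ (hT.trans_lt hu) ha haT hu.le
    (fun _ hs => hσ.nonneg hχ hs.1) hc

theorem delayUpperBound (hσ : IsDelaySolution χ σ) (hχ : IsDelayKernel χ M) {T : ℝ} (hT : 1 ≤ T)
    (hχT : ∀ᵐ t, T < t → χ t = 0) : DelayUpperBound σ T (∫ t in (0 : ℝ)..T, χ t) := by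
  intro u hu C hC
  have hT0 : 0 ≤ T := by linarith
  have hint := hχ.intervalIntegrable_comp_sub_mul (by linarith)
    (hσ.intervalIntegrable hχ (show 0 ≤ u by linarith))
  have hpast := intervalIntegrable_of_le_of_le hint le_rfl hT0 hu.le
  have htail : ∫ t in T..u, σ (u - t) * χ t = 0 := by
    refine intervalIntegral.integral_zero_ae ?_
    filter_upwards [hχT] with t ht htu
    rw [uIoc_of_le hu.le] at htu
    rw [ht htu.1, mul_zero]
  rw [hσ.mul_eq_integral u (by linarith),
    ← intervalIntegral.integral_add_adjacent_intervals hpast (hpast.symm.trans hint), htail,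
    add_zero, mul_comm, ← intervalIntegral.integral_const_mul]
  exact intervalIntegral.integral_mono_on hT0 hpast
    ((hχ.intervalIntegrable le_rfl hT0).const_mul C) fun t ht =>
      mul_le_mul_of_nonneg_right (hC _ ⟨by linarith [ht.2], by linarith [ht.1]⟩)
        (hχ.nonneg t ht.1)

end IsDelaySolution

/-! ### Functions with minimal vanishing tail -/

lemma setIntegral_Ioi_eq_intervalIntegral {f : ℝ → ℝ} {a T : ℝ} (haT : a ≤ T)
    (hf : ∀ᵐ t, T < t → f t = 0) : ∫ t in Ioi a, f t = ∫ t in a..T, f t := by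
  rw [intervalIntegral.integral_of_le haT]
  refine setIntegral_eq_of_subset_of_ae_sdiff_eq_zero measurableSet_Ioi.nullMeasurableSet
    Ioc_subset_Ioi_self ?_
  filter_upwards [hf] with t ht htdiff
  exact ht (not_le.1 fun htT => htdiff.2 ⟨htdiff.1, htT⟩)

section MinimalTail

variable {f : ℝ → ℝ} {a b T : ℝ}

lemma ae_eq_zero_of_isLeast_tail (hbT : b < T) (hf : ∀ t, b < t → 0 ≤ f t)
    (hT : IsLeast {S | ∫ t in Ioi S, f t = 0} T) : ∀ᵐ t, T < t → f t = 0 := by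
  -- A non-integrable tail would have integral `0`, contradicting the minimality of `T`.
  have hint : IntegrableOn f (Ioi b) := by
    by_contra h
    exact (hT.2 (integral_undef h)).not_gt hbT
  have hnonneg : 0 ≤ᵐ[volume.restrict (Ioi T)] f := by
    filter_upwards [ae_restrict_mem measurableSet_Ioi] with t ht
    exact hf t (hbT.trans ht)
  exact (ae_restrict_iff' measurableSet_Ioi).1 <| (setIntegral_eq_zero_iff_of_nonneg_ae hnonneg
    (hint.mono_set (Ioi_subset_Ioi hbT.le))).1 hT.1

lemma integral_pos_of_isLeast_tail (haT : a < T) (hf : ∀ t, a < t → 0 ≤ f t)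
    (hT : IsLeast {S | ∫ t in Ioi S, f t = 0} T) : 0 < ∫ t in a..T, f t := by
  rw [← setIntegral_Ioi_eq_intervalIntegral haT.le (ae_eq_zero_of_isLeast_tail haT hf hT)]
  exact (setIntegral_nonneg measurableSet_Ioi hf).lt_of_ne' fun h => (hT.2 h).not_gt haT

end MinimalTail

/-! ### The asymptotics of `ξ` and `σ` -/

section Asymptotics

variable {χ σ ξ : ℝ → ℝ} {M T : ℝ}

theorem IsDelayKernel.tendsto_mul_div_log (hχ : IsDelayKernel χ M) (hT1 : 1 < T)
    (hT : IsLeast {S | ∫ t in Ioi S, χ t = 0} T)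
    (hξ : ∀ᶠ u in atTop, ∫ v in Ioi (1 : ℝ), χ v * Real.exp (ξ u * v) = u) :
    Tendsto (fun u => ξ u * T / Real.log u) atTop (𝓝 1) := by
  have hχT := ae_eq_zero_of_isLeast_tail hT1 (fun t ht => hχ.nonneg t (by linarith)) hT
  refine tendsto_mul_div_log_of_integral_mul_exp_eq zero_le_one hT1
    (hχ.intervalIntegrable zero_le_one hT1.le) (fun v hv => hχ.nonneg v (by linarith [hv.1]))
    (fun a ha => integral_pos_of_isLeast_tail ha.2
      (fun t ht => hχ.nonneg t (by linarith [ha.1])) hT) ?_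
  filter_upwards [hξ] with u hu
  rw [← setIntegral_Ioi_eq_intervalIntegral hT1.le, hu]
  filter_upwards [hχT] with t ht htT
  rw [ht htT, zero_mul]

theorem IsDelaySolution.tendsto_log_div (hσ : IsDelaySolution χ σ) (hχ : IsDelayKernel χ M)
    (hT1 : 1 < T) (hT : IsLeast {S | ∫ t in Ioi S, χ t = 0} T) :
    Tendsto (fun u => Real.log (σ u) / (u * Real.log u)) atTop (𝓝 (-T⁻¹)) := by
  have hT0 : 0 < T := by linarith
  have hmass : ∀ a, 0 ≤ a → a < T → 0 < ∫ t in a..T, χ t := fun a ha haT =>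
    integral_pos_of_isLeast_tail haT (fun t ht => hχ.nonneg t (ha.trans ht.le)) hT
  have hχT := ae_eq_zero_of_isLeast_tail hT0 (fun t ht => hχ.nonneg t ht.le) hT
  exact (hσ.delayUpperBound hχ hT1.le hχT).tendsto_log_div hT0 (hmass 0 le_rfl hT0)
    (fun a ha => ⟨_, hmass a ha.1.le ha.2, hσ.delayLowerBound hχ hT1.le ha.1.le ha.2.le⟩)
    (hσ.exists_pos_forall_le hχ) (hσ.exists_forall_le hχ)

end Asymptotics

theorem statement7_general (χ : ℝ → ℝ) (hmeas : Measurable χ)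
    (hχ1 : ∀ t : ℝ, 0 ≤ t → t ≤ 1 → χ t = 1)
    (M : ℝ) (hχ2 : ∀ t : ℝ, 1 < t → 0 ≤ χ t ∧ χ t ≤ M)
    (T : ℝ) (hT : 1 < T) (hT0 : (∫ t in Set.Ioi T, χ t) = 0)
    (hTmin : ∀ T' : ℝ, (∫ t in Set.Ioi T', χ t) = 0 → T ≤ T')
    (σ : ℝ → ℝ)
    (hσ1 : ∀ u : ℝ, 0 ≤ u → u ≤ 1 → σ u = 1)
    (hσeq : ∀ u : ℝ, 1 < u → u * σ u = ∫ t in (0 : ℝ)..u, σ (u - t) * χ t)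
    (ξ : ℝ → ℝ)
    (hξ : ∀ u : ℝ, 1 < u → u = ∫ v in Set.Ioi (1 : ℝ), χ v * Real.exp (ξ u * v)) :
    Filter.Tendsto (fun u : ℝ => ξ u * T / Real.log u) Filter.atTop (nhds 1) ∧
    Filter.Tendsto (fun u : ℝ => Real.log (σ u) / (u * Real.log u / T))
      Filter.atTop (nhds (-1)) := by
  have hχ : IsDelayKernel χ (max 1 M) := by
    refine ⟨hmeas, hχ1, fun t ht => ?_, fun t ht => ?_⟩ <;> rcases le_or_gt t 1 with h | h
    · exact (hχ1 t ht h).ge.trans' zero_le_one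
    · exact (hχ2 t h).1
    · exact (hχ1 t ht h).le.trans (le_max_left _ _)
    · exact (hχ2 t h).2.trans (le_max_right _ _)
  have hTleast : IsLeast {S | ∫ t in Ioi S, χ t = 0} T := ⟨hT0, fun S hS => hTmin S hS⟩
  refine ⟨hχ.tendsto_mul_div_log hT hTleast ?_, ?_⟩
  · filter_upwards [eventually_gt_atTop 1] with u hu using (hξ u hu).symm
  · have h := (IsDelaySolution.tendsto_log_div ⟨hσ1, hσeq⟩ hχ hT hTleast).mul_const T
    rw [neg_mul, inv_mul_cancel₀ (by linarith)] at h
    simpa only [div_div_eq_mul_div, div_mul_eq_mul_div] using h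

theorem statement7 (χ : ℝ → ℝ) (hmeas : Measurable χ)
    (hχ1 : ∀ t : ℝ, 0 ≤ t → t ≤ 1 → χ t = 1)
    (hχ2 : ∀ t : ℝ, 1 < t → 0 ≤ χ t ∧ χ t ≤ 1)
    (T : ℝ) (hT : 1 < T) (hT0 : (∫ t in Set.Ioi T, χ t) = 0)
    (hTmin : ∀ T' : ℝ, (∫ t in Set.Ioi T', χ t) = 0 → T ≤ T')
    (σ : ℝ → ℝ)
    (hσ1 : ∀ u : ℝ, 0 ≤ u → u ≤ 1 → σ u = 1)
    (hσeq : ∀ u : ℝ, 1 < u → u * σ u = ∫ t in (0 : ℝ)..u, σ (u - t) * χ t)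
    (ξ : ℝ → ℝ)
    (hξ : ∀ u : ℝ, 1 < u → u = ∫ v in Set.Ioi (1 : ℝ), χ v * Real.exp (ξ u * v)) :
    Filter.Tendsto (fun u : ℝ => ξ u * T / Real.log u) Filter.atTop (nhds 1) ∧
    Filter.Tendsto (fun u : ℝ => Real.log (σ u) / (u * Real.log u / T))
      Filter.atTop (nhds (-1)) :=
  statement7_general χ hmeas hχ1 1 hχ2 T hT hT0 hTmin σ hσ1 hσeq ξ hξ
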